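/- Let Y be a real Banach space, let ε > 0 and M > 0, and let F : Y → Y satisfy F(0) = 0 and ‖F(u) − F(v)‖ ≤ M‖u − v‖(‖u‖^ε + ‖v‖^ε) for all u, v ∈ Y. Then for every δ with 0 < δ < 1/(2·(2M)^(1/ε)) and every a ∈ Y with ‖a‖ ≤ δ, the map Φ : u ↦ a + F(u) admits a fixed point in the closed ball of center 0 and radius 2δ, and this fixed point is the unique fixed point of Φ in that closed ball. -/

import Mathlib

/-- **Fixed point theorem.** Let `Y` be a real Banach space, `ε > 0`, `M > 0`, and
`F : Y → Y` with `F 0 = 0` and `‖F u - F v‖ ≤ M ‖u - v‖ (‖u‖^ε + ‖v‖^ε)`.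
Then for every `0 < δ < 1/(2 (2M)^(1/ε))` and every `a` with `‖a‖ ≤ δ`, the map
`u ↦ a + F u` has a fixed point in the closed ball of radius `2δ` centered at `0`,
unique among fixed points in that ball. -/
theorem fixed_point_in_ball
    {Y : Type*} [NormedAddCommGroup Y] [NormedSpace ℝ Y] [CompleteSpace Y]
    (ε M : ℝ) (hε : 0 < ε) (hM : 0 < M)
    (F : Y → Y) (hF0 : F 0 = 0)
    (hF : ∀ u v : Y, ‖F u - F v‖ ≤ M * ‖u - v‖ * (‖u‖ ^ ε + ‖v‖ ^ ε))
    (δ : ℝ) (hδ0 : 0 < δ) (hδ : δ < 1 / (2 * (2 * M) ^ (1 / ε)))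
    (a : Y) (ha : ‖a‖ ≤ δ) :
    ∃ u : Y, ‖u‖ ≤ 2 * δ ∧ a + F u = u ∧
      ∀ v : Y, ‖v‖ ≤ 2 * δ → a + F v = v → v = u := by
  have hP : 0 < (2 * M) ^ (1 / ε) := Real.rpow_pos_of_pos (by positivity) _
  have h1 : 2 * δ * (2 * M) ^ (1 / ε) < 1 := by
    rw [lt_div_iff₀ (by positivity)] at hδ
    linarith
  have h2 : (2 * δ) ^ ε * (2 * M) < 1 := by
    have h := Real.rpow_lt_rpow (by positivity) h1 hε
    rw [Real.mul_rpow (by positivity) hP.le, ← Real.rpow_mul (by positivity),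
      one_div_mul_cancel hε.ne', Real.rpow_one, Real.one_rpow] at h
    exact h
  have hr : 0 < (2 * δ) ^ ε := Real.rpow_pos_of_pos (by positivity) _
  have hpow : ∀ u : Y, ‖u‖ ≤ 2 * δ → ‖u‖ ^ ε ≤ (2 * δ) ^ ε := fun u hu =>
    Real.rpow_le_rpow (norm_nonneg _) hu hε.le
  -- contraction estimate on the ball
  have hlip : ∀ u v : Y, ‖u‖ ≤ 2 * δ → ‖v‖ ≤ 2 * δ →
      ‖F u - F v‖ ≤ (2 * δ) ^ ε * (2 * M) * ‖u - v‖ := by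
    intro u v hu hv
    calc ‖F u - F v‖ ≤ M * ‖u - v‖ * (‖u‖ ^ ε + ‖v‖ ^ ε) := hF u v
      _ ≤ M * ‖u - v‖ * ((2 * δ) ^ ε + (2 * δ) ^ ε) :=
        mul_le_mul_of_nonneg_left (add_le_add (hpow u hu) (hpow v hv)) (by positivity)
      _ = _ := by ring
  -- the ball is mapped into itself
  have hself : ∀ u : Y, ‖u‖ ≤ 2 * δ → ‖a + F u‖ ≤ 2 * δ := by
    intro u hu
    have h := hF u 0
    rw [hF0, sub_zero, sub_zero, norm_zero, Real.zero_rpow hε.ne', add_zero] at h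
    have h3 : M * ‖u‖ * ‖u‖ ^ ε ≤ M * (2 * δ) * (2 * δ) ^ ε := by
      have := hpow u hu
      gcongr
    have h4 : M * (2 * δ) * (2 * δ) ^ ε ≤ δ := by nlinarith
    linarith [norm_add_le a (F u)]
  have hmaps : Set.MapsTo (fun u => a + F u) (Metric.closedBall (0 : Y) (2 * δ))
      (Metric.closedBall (0 : Y) (2 * δ)) := by
    intro u hu
    rw [mem_closedBall_zero_iff] at hu ⊢
    exact hself u hu
  obtain ⟨K, hK⟩ : ∃ K : NNReal, (K : ℝ) = (2 * δ) ^ ε * (2 * M) :=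
    ⟨Real.toNNReal ((2 * δ) ^ ε * (2 * M)), Real.coe_toNNReal _ (by positivity)⟩
  have hc : ContractingWith K
      (hmaps.restrict (fun u => a + F u) _ _) := by
    refine ⟨by rw [← NNReal.coe_lt_coe, hK]; exact h2, LipschitzWith.of_dist_le_mul ?_⟩
    rintro ⟨u, hu⟩ ⟨v, hv⟩
    rw [mem_closedBall_zero_iff] at hu hv
    have := hlip u v hu hv
    rw [← hK] at this
    simpa [Subtype.dist_eq, dist_eq_norm] using this
  obtain ⟨u, hu, hfix, -⟩ := hc.exists_fixedPoint' Metric.isClosed_closedBall.isComplete hmaps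
    (Metric.mem_closedBall_self (by positivity)) (edist_ne_top _ _)
  rw [mem_closedBall_zero_iff] at hu
  have hfix' : a + F u = u := hfix
  refine ⟨u, hu, hfix', fun v hv hfv => ?_⟩
  have h := hlip v u hv hu
  have h5 : F v - F u = v - u := by
    calc F v - F u = (a + F v) - (a + F u) := by abel
      _ = v - u := by rw [hfv, hfix']
  rw [h5] at h
  have h6 : ‖v - u‖ = 0 := by nlinarith [norm_nonneg (v - u)]
  exact sub_eq_zero.1 (norm_eq_zero.1 h6)
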